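/- Let x₁, …, xₙ ∈ ℝ^D with xᵢ = zᵢ + yᵢ, where each zᵢ lies in a linear subspace S of ℝ^D and each yᵢ lies in the orthogonal complement of S, and let the embeddings be x̃ᵢ = zᵢ + rᵢ with each rᵢ also in the orthogonal complement of S. Assume not all xᵢ are equal and not all yᵢ are equal, and suppose Σ_{i,j} ‖yᵢ − yⱼ‖² = (1−p)·Σ_{i,j} ‖xᵢ − xⱼ‖² for some p ∈ [0,1). Then the Stress of the embedding satisfies Λ_S² ≤ (1−p)·Λ_S(Y,R)², where Λ_S(Y,R)² = Σ_{i,j}(‖yᵢ − yⱼ‖ − ‖rᵢ − rⱼ‖)² / Σ_{i,j}‖yᵢ − yⱼ‖² is the Stress between the residual points yᵢ and their projections rᵢ. -/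

import Mathlib

theorem stmt7_aux {E : Type*} [NormedAddCommGroup E] [InnerProductSpace ℝ E] (a b c : E)
    (hb : inner ℝ a b = 0) (hc : inner ℝ a c = 0) :
    (‖a + b‖ - ‖a + c‖) ^ 2 ≤ (‖b‖ - ‖c‖) ^ 2 := by
  have h1 := norm_add_sq_eq_norm_sq_add_norm_sq_of_inner_eq_zero a b hb
  have h2 := norm_add_sq_eq_norm_sq_add_norm_sq_of_inner_eq_zero a c hc
  have h3 : ‖a‖ ^ 2 + ‖b‖ * ‖c‖ ≤ ‖a + b‖ * ‖a + c‖ := by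
    refine le_of_abs_le (abs_le_of_sq_le_sq ?_ ?_)
    · have : (‖a + b‖ * ‖a + c‖) ^ 2 = (‖a + b‖ * ‖a + b‖) * (‖a + c‖ * ‖a + c‖) := by ring
      rw [this, h1, h2]
      nlinarith [mul_nonneg (sq_nonneg ‖a‖) (sq_nonneg (‖b‖ - ‖c‖))]
    · positivity
  nlinarith

/-- Key step of the DiffRed Stress bound: if `xᵢ = zᵢ + yᵢ` with `zᵢ ∈ S`, `yᵢ ∈ Sᗮ`,
embeddings `x̃ᵢ = zᵢ + rᵢ` with `rᵢ ∈ Sᗮ`, not all `xᵢ` equal, not all `yᵢ` equal, and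
`Σ_{i,j} ‖yᵢ − yⱼ‖² = (1−p) Σ_{i,j} ‖xᵢ − xⱼ‖²` with `p ∈ [0,1)`, then
`Λ_S² ≤ (1−p) · Λ_S(Y,R)²`. -/
theorem stmt7 (n D : ℕ) (S : Submodule ℝ (EuclideanSpace ℝ (Fin D)))
    (x z y r : Fin n → EuclideanSpace ℝ (Fin D))
    (hzS : ∀ i, z i ∈ S) (hyS : ∀ i, y i ∈ Sᗮ) (hrS : ∀ i, r i ∈ Sᗮ)
    (hx : ∀ i, x i = z i + y i)
    (hxne : ∃ i j, x i ≠ x j) (hyne : ∃ i j, y i ≠ y j)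
    (p : ℝ) (hp : p ∈ Set.Ico (0 : ℝ) 1)
    (hres : ∑ i, ∑ j, ‖y i - y j‖ ^ 2 = (1 - p) * ∑ i, ∑ j, ‖x i - x j‖ ^ 2) :
    (∑ i, ∑ j, (‖x i - x j‖ - ‖(z i + r i) - (z j + r j)‖) ^ 2) /
        (∑ i, ∑ j, ‖x i - x j‖ ^ 2)
      ≤ (1 - p) *
        ((∑ i, ∑ j, (‖y i - y j‖ - ‖r i - r j‖) ^ 2) / (∑ i, ∑ j, ‖y i - y j‖ ^ 2)) := by
  have h1p : (1 - p) ≠ 0 := by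
    have := hp.2
    intro h
    linarith
  rw [hres, ← mul_div_assoc, mul_div_mul_left _ _ h1p]
  have key : ∀ i j, (‖x i - x j‖ - ‖(z i + r i) - (z j + r j)‖) ^ 2
      ≤ (‖y i - y j‖ - ‖r i - r j‖) ^ 2 := by
    intro i j
    have e1 : x i - x j = (z i - z j) + (y i - y j) := by
      rw [hx, hx]; abel
    have e2 : (z i + r i) - (z j + r j) = (z i - z j) + (r i - r j) := by abel
    rw [e1, e2]
    have hz := S.sub_mem (hzS i) (hzS j)
    exact stmt7_aux _ _ _
      (Submodule.inner_right_of_mem_orthogonal hz (Sᗮ.sub_mem (hyS i) (hyS j)))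
      (Submodule.inner_right_of_mem_orthogonal hz (Sᗮ.sub_mem (hrS i) (hrS j)))
  apply div_le_div_of_nonneg_right
  · exact Finset.sum_le_sum fun i _ => Finset.sum_le_sum fun j _ => key i j
  · positivity
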